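/- arXiv:1009.3421 — 2 statements merged into one kernel-verified Lean document; each statement's English description precedes it below -/
import Mathlib

section
/- Logarithmic Sobolev inequality in squared form: for every smooth compactly supported f on ℝⁿ, Ent_γ(f²) ≤ 2 ∫ |∇f|² dγ, where Ent_γ(g) = ∫ g log(g/∫g dγ) dγ. -/
open MeasureTheory Real

noncomputable def gaussian (n : ℕ) : Measure (EuclideanSpace ℝ (Fin n)) :=
  (volume : Measure (EuclideanSpace ℝ (Fin n))).withDensity
    (fun x => ENNReal.ofReal ((2 * Real.pi) ^ (-(n : ℝ) / 2) * Real.exp (-‖x‖ ^ 2 / 2)))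

noncomputable def OU (n : ℕ) (t : ℝ) (f : EuclideanSpace ℝ (Fin n) → ℝ)
    (x : EuclideanSpace ℝ (Fin n)) : ℝ :=
  ∫ y, f (Real.exp (-t) • x + Real.sqrt (1 - Real.exp (-2 * t)) • y) ∂(gaussian n)

open ProbabilityTheory

section Density

variable {n : ℕ}

/-- The density of the standard Gaussian measure with respect to Lebesgue measure. -/
noncomputable def gaussianDensity (n : ℕ) (x : EuclideanSpace ℝ (Fin n)) : ℝ :=
  (2 * π) ^ (-(n : ℝ) / 2) * rexp (-‖x‖ ^ 2 / 2)

lemma gaussianDensity_nonneg (x : EuclideanSpace ℝ (Fin n)) : 0 ≤ gaussianDensity n x := by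
  unfold gaussianDensity; positivity

lemma measurable_ofReal_gaussianDensity :
    Measurable fun x : EuclideanSpace ℝ (Fin n) => ENNReal.ofReal (gaussianDensity n x) := by
  unfold gaussianDensity; fun_prop

lemma integral_gaussian_eq {F : Type*} [NormedAddCommGroup F] [NormedSpace ℝ F]
    (φ : EuclideanSpace ℝ (Fin n) → F) :
    ∫ x, φ x ∂(gaussian n) = ∫ x, gaussianDensity n x • φ x := by
  change ∫ x, φ x ∂(volume.withDensity fun x => ENNReal.ofReal (gaussianDensity n x)) = _
  rw [integral_withDensity_eq_integral_toReal_smul measurable_ofReal_gaussianDensity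
    (by simp)]
  simp [ENNReal.toReal_ofReal, gaussianDensity_nonneg]

lemma integrable_gaussian_iff {φ : EuclideanSpace ℝ (Fin n) → ℝ} :
    Integrable φ (gaussian n) ↔ Integrable fun x => gaussianDensity n x * φ x := by
  change Integrable φ (volume.withDensity fun x => ENNReal.ofReal (gaussianDensity n x)) ↔ _
  rw [integrable_withDensity_iff_integrable_smul' measurable_ofReal_gaussianDensity (by simp)]
  simp [ENNReal.toReal_ofReal, gaussianDensity_nonneg]

lemma integrable_gaussianDensity : Integrable (gaussianDensity n) := by
  have h := (GaussianFourier.integrable_cexp_neg_mul_sq_norm_add (b := 1 / 2)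
    (by norm_num) 0 (0 : EuclideanSpace ℝ (Fin n))).re.const_mul ((2 * π) ^ (-(n : ℝ) / 2))
  refine h.congr (.of_forall fun x => ?_)
  have : (-(1 / 2) * (‖x‖ : ℂ) ^ 2 + 0 * (inner ℝ (0 : EuclideanSpace ℝ (Fin n)) x : ℝ))
      = ((-‖x‖ ^ 2 / 2 : ℝ) : ℂ) := by
    push_cast; ring
  simp only [this, gaussianDensity, ← Complex.ofReal_exp, RCLike.re_to_complex, Complex.ofReal_re]

instance isFiniteMeasure_gaussian : IsFiniteMeasure (gaussian n) :=
  isFiniteMeasure_withDensity_ofReal integrable_gaussianDensity.2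

lemma gaussian_eq_stdGaussian : gaussian n = stdGaussian (EuclideanSpace ℝ (Fin n)) := by
  refine Measure.ext_of_charFun (funext fun t => ?_)
  rw [charFun_stdGaussian, charFun_apply, integral_gaussian_eq]
  have key := GaussianFourier.integral_cexp_neg_mul_sq_norm_add (b := 1 / 2)
    (by norm_num) Complex.I t
  have hx (x : EuclideanSpace ℝ (Fin n)) :
      gaussianDensity n x • Complex.exp ((inner ℝ x t : ℝ) * Complex.I)
        = ((2 * π) ^ (-(n : ℝ) / 2) : ℝ) *
          Complex.exp (-(1 / 2) * (‖x‖ : ℂ) ^ 2 + Complex.I * (inner ℝ t x : ℝ)) := by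
    rw [gaussianDensity, Complex.real_smul, Complex.ofReal_mul, Complex.ofReal_exp, mul_assoc,
      ← Complex.exp_add, real_inner_comm]
    congr 2
    push_cast; ring
  simp_rw [hx]
  rw [integral_const_mul, key, ← mul_assoc]
  have hc : (((2 * π) ^ (-(n : ℝ) / 2) : ℝ) : ℂ) *
      ((π : ℂ) / (1 / 2)) ^ ((Module.finrank ℝ (EuclideanSpace ℝ (Fin n)) : ℂ) / 2) = 1 := by
    have h2 : ((π : ℂ) / (1 / 2)) = ((2 * π : ℝ) : ℂ) := by push_cast; ring
    have h3 : ((Module.finrank ℝ (EuclideanSpace ℝ (Fin n)) : ℂ) / 2) = ((n / 2 : ℝ) : ℂ) := by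
      simp
    rw [h2, h3, ← Complex.ofReal_cpow (by positivity), ← Complex.ofReal_mul,
      ← Real.rpow_add (by positivity)]
    simp [neg_div]
  rw [hc, one_mul]
  congr 1
  rw [Complex.I_sq]
  ring

instance isGaussian_gaussian : IsGaussian (gaussian n) := by
  rw [gaussian_eq_stdGaussian]; infer_instance

lemma integrable_norm_gaussian : Integrable (fun x => ‖x‖) (gaussian n) :=
  (IsGaussian.integrable_id (μ := gaussian n)).norm

lemma map_rotation_gaussian (θ : ℝ) :
    ((gaussian n).prod (gaussian n)).map (ContinuousLinearMap.rotation θ)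
      = (gaussian n).prod (gaussian n) := by
  refine IsGaussian.map_rotation_eq_self ?_ θ
  rw [gaussian_eq_stdGaussian]
  exact integral_id_stdGaussian

lemma hasFDerivAt_gaussianDensity (x : EuclideanSpace ℝ (Fin n)) :
    HasFDerivAt (gaussianDensity n) (-gaussianDensity n x • innerSL ℝ x) x := by
  have h := (((hasStrictFDerivAt_norm_sq x).hasFDerivAt.const_mul (-(1 / 2 : ℝ))).exp).const_mul
    ((2 * π) ^ (-(n : ℝ) / 2))
  convert! h using 1
  · ext y
    simp only [gaussianDensity]
    ring_nf
  · ext y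
    simp [gaussianDensity]
    ring_nf

/-- Gaussian integration by parts for a bounded function with bounded derivative. -/
lemma integral_mul_inner_gaussian {ψ : EuclideanSpace ℝ (Fin n) → ℝ}
    {ψ' : EuclideanSpace ℝ (Fin n) → EuclideanSpace ℝ (Fin n) →L[ℝ] ℝ} {A B : ℝ}
    (hψ : ∀ x, HasFDerivAt ψ (ψ' x) x) (hψ' : Continuous ψ') (hA : ∀ x, |ψ x| ≤ A)
    (hB : ∀ x, ‖ψ' x‖ ≤ B) (w : EuclideanSpace ℝ (Fin n)) :
    ∫ x, ψ x * inner ℝ x w ∂(gaussian n) = ∫ x, ψ' x w ∂(gaussian n) := by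
  have hc : Continuous ψ := continuous_iff_continuousAt.2 fun x => (hψ x).continuousAt
  have i1 : Integrable ψ (gaussian n) :=
    .of_bound hc.aestronglyMeasurable A (.of_forall hA)
  have i2 : Integrable (fun x => ψ' x w) (gaussian n) :=
    .of_bound (by fun_prop) (B * ‖w‖)
      (.of_forall fun x => (ψ' x).le_of_opNorm_le (hB x) w)
  have i3 : Integrable (fun x => ψ x * inner ℝ x w) (gaussian n) := by
    refine (integrable_norm_gaussian.mul_const (A * ‖w‖)).mono' (by fun_prop)
      (.of_forall fun x => ?_)
    rw [norm_mul, Real.norm_eq_abs, Real.norm_eq_abs]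
    calc |ψ x| * |inner ℝ x w| ≤ A * (‖x‖ * ‖w‖) :=
          mul_le_mul (hA x) (abs_real_inner_le_norm x w) (abs_nonneg _)
            ((abs_nonneg _).trans (hA x))
      _ = ‖x‖ * (A * ‖w‖) := by ring
  rw [integrable_gaussian_iff] at i1 i2 i3
  have h := integral_bilinear_hasFDerivAt_right_eq_neg_left_of_integrable (μ := volume)
    (f := ψ) (f' := ψ') (g := gaussianDensity n) (g' := fun x => -gaussianDensity n x • innerSL ℝ x)
    (v := w) (B := ContinuousLinearMap.mul ℝ ℝ)
    (i2.congr (.of_forall fun x => by simp; ring))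
    (i3.neg.congr (.of_forall fun x => by simp; ring))
    (i1.congr (.of_forall fun x => by simp; ring))
    (fun x _ => hψ x) (fun x _ => hasFDerivAt_gaussianDensity x)
  rw [integral_gaussian_eq, integral_gaussian_eq]
  have h1 : ∫ x, gaussianDensity n x • (ψ x * inner ℝ x w) =
      -∫ x, ContinuousLinearMap.mul ℝ ℝ (ψ x) ((-gaussianDensity n x • innerSL ℝ x) w) := by
    rw [← integral_neg]
    congr with x
    simp; ring
  rw [h1, h, neg_neg]
  congr with x
  simp; ring

end Density

section Rotation

variable {n : ℕ} {F : Type*} [NormedAddCommGroup F]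

lemma integrable_comp_rotation {q : EuclideanSpace ℝ (Fin n) → F} (hq : Continuous q) {C : ℝ}
    (hC : ∀ x, ‖q x‖ ≤ C) (θ : ℝ) (x : EuclideanSpace ℝ (Fin n)) :
    Integrable (fun y => q (cos θ • x + sin θ • y)) (gaussian n) :=
  .of_bound (Continuous.aestronglyMeasurable (by fun_prop)) C (.of_forall fun _ => hC _)

variable [NormedSpace ℝ F]

/-- The Ornstein–Uhlenbeck semigroup, parametrised by the angle `θ` with `cos θ = exp (-t)`. -/
noncomputable def rotAvg (q : EuclideanSpace ℝ (Fin n) → F) (θ : ℝ)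
    (x : EuclideanSpace ℝ (Fin n)) : F :=
  ∫ y, q (cos θ • x + sin θ • y) ∂(gaussian n)

lemma norm_rotAvg_le {q : EuclideanSpace ℝ (Fin n) → F} {C : ℝ}
    (hC : ∀ x, ‖q x‖ ≤ C) (θ : ℝ) (x : EuclideanSpace ℝ (Fin n)) : ‖rotAvg q θ x‖ ≤ C := by
  simpa [rotAvg] using norm_integral_le_of_norm_le_const (μ := gaussian n)
    (.of_forall fun y => hC (cos θ • x + sin θ • y))

lemma continuous_rotAvg {q : EuclideanSpace ℝ (Fin n) → F} (hq : Continuous q) {C : ℝ}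
    (hC : ∀ x, ‖q x‖ ≤ C) (θ : ℝ) : Continuous (rotAvg q θ) :=
  continuous_of_dominated (bound := fun _ => C)
    (fun _ => Continuous.aestronglyMeasurable (by fun_prop))
    (fun _ => .of_forall fun _ => hC _) (integrable_const _) (.of_forall fun _ => by fun_prop)

lemma integral_comp_rotation_prod {G : EuclideanSpace ℝ (Fin n) × EuclideanSpace ℝ (Fin n) → ℝ}
    (hG : Continuous G) (θ : ℝ) :
    ∫ p, G (ContinuousLinearMap.rotation θ p) ∂((gaussian n).prod (gaussian n)) =
      ∫ p, G p ∂((gaussian n).prod (gaussian n)) := by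
  conv_rhs => rw [← map_rotation_gaussian θ]
  rw [integral_map (by fun_prop) hG.aestronglyMeasurable]

lemma integral_rotAvg {q : EuclideanSpace ℝ (Fin n) → ℝ} (hq : Continuous q) {C : ℝ}
    (hC : ∀ x, ‖q x‖ ≤ C) (θ : ℝ) :
    ∫ x, rotAvg q θ x ∂(gaussian n) = ∫ x, q x ∂(gaussian n) := by
  have h := integral_comp_rotation_prod (n := n) (G := fun p => q p.1) (by fun_prop) θ
  rw [integral_fun_fst] at h
  simp only [ContinuousLinearMap.rotation_apply, measureReal_def, measure_univ,
    ENNReal.toReal_one, one_smul] at h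
  rw [← h, integral_prod _ (.of_bound (Continuous.aestronglyMeasurable (by fun_prop)) C
    (.of_forall fun _ => hC _))]
  rfl

end Rotation

section EntropyFlow

variable {n : ℕ} {g : EuclideanSpace ℝ (Fin n) → ℝ}
  {k : EuclideanSpace ℝ (Fin n) → EuclideanSpace ℝ (Fin n)} {ε M L : ℝ}

/-- `g` is a `C¹` function with values in `[ε, M]`, where `0 < ε`, and `k` is its gradient, which is
bounded by `L`. -/
structure IsPosC1 (g : EuclideanSpace ℝ (Fin n) → ℝ)
    (k : EuclideanSpace ℝ (Fin n) → EuclideanSpace ℝ (Fin n)) (ε M L : ℝ) : Prop where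
  pos : 0 < ε
  le_apply : ∀ x, ε ≤ g x
  apply_le : ∀ x, g x ≤ M
  hasFDerivAt : ∀ x, HasFDerivAt g (innerSL ℝ (k x)) x
  continuous_grad : Continuous k
  norm_grad_le : ∀ x, ‖k x‖ ≤ L

namespace IsPosC1

lemma continuous (H : IsPosC1 g k ε M L) : Continuous g :=
  continuous_iff_continuousAt.2 fun x => (H.hasFDerivAt x).continuousAt

lemma apply_pos (H : IsPosC1 g k ε M L) (x) : 0 < g x := H.pos.trans_le (H.le_apply x)

lemma norm_le (H : IsPosC1 g k ε M L) (x) : ‖g x‖ ≤ M := by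
  rw [Real.norm_of_nonneg (H.apply_pos x).le]; exact H.apply_le x

lemma bound_nonneg (H : IsPosC1 g k ε M L) : 0 ≤ L := (norm_nonneg _).trans (H.norm_grad_le 0)

lemma le_rotAvg (H : IsPosC1 g k ε M L) (θ : ℝ) (x) : ε ≤ rotAvg g θ x := by
  simpa [rotAvg] using integral_mono (μ := gaussian n) (integrable_const ε)
    (integrable_comp_rotation H.continuous H.norm_le θ x) fun y => H.le_apply _

lemma rotAvg_pos (H : IsPosC1 g k ε M L) (θ : ℝ) (x) : 0 < rotAvg g θ x :=
  H.pos.trans_le (H.le_rotAvg θ x)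

lemma rotAvg_le (H : IsPosC1 g k ε M L) (θ : ℝ) (x) : rotAvg g θ x ≤ M :=
  (le_abs_self _).trans (norm_rotAvg_le H.norm_le θ x)

lemma abs_log_rotAvg_le (H : IsPosC1 g k ε M L) (θ : ℝ) (x) :
    |log (rotAvg g θ x)| ≤ |log ε| + |log M| := by
  have h1 := log_le_log H.pos (H.le_rotAvg θ x)
  have h2 := log_le_log (H.rotAvg_pos θ x) (H.rotAvg_le θ x)
  rw [abs_le]
  constructor
  · linarith [neg_abs_le (log ε), abs_nonneg (log M)]
  · linarith [le_abs_self (log M), abs_nonneg (log ε)]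

lemma abs_log_rotAvg_add_one_le (H : IsPosC1 g k ε M L) (θ : ℝ) (x) :
    |log (rotAvg g θ x) + 1| ≤ |log ε| + |log M| + 1 :=
  (abs_add_le _ _).trans (by simpa using H.abs_log_rotAvg_le θ x)

lemma abs_rotAvg_mul_log_le (H : IsPosC1 g k ε M L) (θ : ℝ) (x) :
    |rotAvg g θ x * log (rotAvg g θ x)| ≤ M * (|log ε| + |log M|) := by
  rw [abs_mul, abs_of_pos (H.rotAvg_pos θ x)]
  exact mul_le_mul (H.rotAvg_le θ x) (H.abs_log_rotAvg_le θ x) (abs_nonneg _)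
    ((H.rotAvg_pos θ x).le.trans (H.rotAvg_le θ x))

lemma hasFDerivAt_rotAvg (H : IsPosC1 g k ε M L) (θ : ℝ) (x) :
    HasFDerivAt (rotAvg g θ) (cos θ • innerSL ℝ (rotAvg k θ x)) x := by
  have hk := H.continuous_grad
  have hg := H.continuous
  have h := hasFDerivAt_integral_of_dominated_of_fderiv_le (𝕜 := ℝ) (μ := gaussian n)
    (F := fun x y => g (cos θ • x + sin θ • y))
    (F' := fun x y => cos θ • innerSL ℝ (k (cos θ • x + sin θ • y)))
    (bound := fun _ => L) (x₀ := x) Filter.univ_mem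
    (.of_forall fun _ => Continuous.aestronglyMeasurable (by fun_prop))
    (integrable_comp_rotation hg H.norm_le θ x)
    (Continuous.aestronglyMeasurable (by fun_prop))
    (.of_forall fun y x _ => ?_) (integrable_const _) (.of_forall fun y x _ => ?_)
  · convert! h using 1
    rw [integral_smul, rotAvg, ← (innerSL ℝ).integral_comp_comm
      (integrable_comp_rotation hk H.norm_grad_le θ x)]
  · rw [norm_smul, innerSL_apply_norm, Real.norm_eq_abs]
    calc |cos θ| * ‖k (cos θ • x + sin θ • y)‖ ≤ 1 * L := by
          gcongr
          exacts [abs_cos_le_one θ, H.norm_grad_le _]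
      _ = L := one_mul L
  · have h1 : HasFDerivAt (fun x => cos θ • x + sin θ • y)
        (cos θ • ContinuousLinearMap.id ℝ (EuclideanSpace ℝ (Fin n))) x :=
      ((hasFDerivAt_id x).const_smul (cos θ)).add_const _
    convert! (H.hasFDerivAt _).comp x h1 using 1
    ext v
    simp

lemma norm_neg_sin_smul_add_le (θ : ℝ) (x y : EuclideanSpace ℝ (Fin n)) :
    ‖-sin θ • x + cos θ • y‖ ≤ ‖x‖ + ‖y‖ := by
  refine (norm_add_le _ _).trans (add_le_add ?_ ?_)
  · rw [norm_smul, norm_neg]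
    exact mul_le_of_le_one_left (norm_nonneg _) (abs_sin_le_one θ)
  · rw [norm_smul]
    exact mul_le_of_le_one_left (norm_nonneg _) (abs_cos_le_one θ)

lemma norm_inner_rotation_le (H : IsPosC1 g k ε M L) (θ : ℝ) (x y) :
    ‖(inner ℝ (k (cos θ • x + sin θ • y)) (-sin θ • x + cos θ • y) : ℝ)‖
      ≤ L * (‖x‖ + ‖y‖) :=
  (norm_inner_le_norm _ _).trans (mul_le_mul (H.norm_grad_le _)
    (norm_neg_sin_smul_add_le θ x y) (norm_nonneg _) H.bound_nonneg)

lemma integrable_mul_norm_add (L : ℝ) (x : EuclideanSpace ℝ (Fin n)) :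
    Integrable (fun y => L * (‖x‖ + ‖y‖)) (gaussian n) :=
  ((integrable_const _).add integrable_norm_gaussian).const_mul L

lemma hasDerivAt_rotAvg (H : IsPosC1 g k ε M L) (θ : ℝ) (x) :
    HasDerivAt (fun θ => rotAvg g θ x)
      (∫ y, inner ℝ (k (cos θ • x + sin θ • y)) (-sin θ • x + cos θ • y) ∂(gaussian n)) θ := by
  have hk := H.continuous_grad
  have hg := H.continuous
  refine (hasDerivAt_integral_of_dominated_loc_of_deriv_le (μ := gaussian n)
    (F := fun θ y => g (cos θ • x + sin θ • y))
    (F' := fun θ y => inner ℝ (k (cos θ • x + sin θ • y)) (-sin θ • x + cos θ • y))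
    (bound := fun y => L * (‖x‖ + ‖y‖)) (x₀ := θ) Filter.univ_mem
    (.of_forall fun _ => Continuous.aestronglyMeasurable (by fun_prop))
    (integrable_comp_rotation hg H.norm_le θ x)
    (Continuous.aestronglyMeasurable (by fun_prop))
    (.of_forall fun y θ _ => H.norm_inner_rotation_le θ x y) (integrable_mul_norm_add L x)
    (.of_forall fun y θ _ => ?_)).2
  have h1 : HasDerivAt (fun θ => cos θ • x + sin θ • y) (-sin θ • x + cos θ • y) θ :=
    ((hasDerivAt_cos θ).smul_const x).add ((hasDerivAt_sin θ).smul_const y)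
  exact (H.hasFDerivAt _).comp_hasDerivAt θ h1

lemma hasDerivAt_integral_rotAvg_mul_log (H : IsPosC1 g k ε M L) (θ : ℝ) :
    HasDerivAt (fun θ => ∫ x, rotAvg g θ x * log (rotAvg g θ x) ∂(gaussian n))
      (∫ x, (log (rotAvg g θ x) + 1) *
        ∫ y, inner ℝ (k (cos θ • x + sin θ • y)) (-sin θ • x + cos θ • y) ∂(gaussian n)
        ∂(gaussian n)) θ := by
  have hk := H.continuous_grad
  have hc (θ : ℝ) : Continuous (rotAvg g θ) := continuous_rotAvg H.continuous H.norm_le θ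
  have hlog (θ : ℝ) : Continuous fun x => log (rotAvg g θ x) :=
    (hc θ).log fun x => (H.rotAvg_pos θ x).ne'
  refine (hasDerivAt_integral_of_dominated_loc_of_deriv_le (μ := gaussian n)
    (F := fun θ x => rotAvg g θ x * log (rotAvg g θ x))
    (F' := fun θ x => (log (rotAvg g θ x) + 1) *
        ∫ y, inner ℝ (k (cos θ • x + sin θ • y)) (-sin θ • x + cos θ • y) ∂(gaussian n))
    (bound := fun x => (|log ε| + |log M| + 1) * ∫ y, L * (‖x‖ + ‖y‖) ∂(gaussian n))
    (x₀ := θ) Filter.univ_mem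
    (.of_forall fun θ => ((hc θ).mul (hlog θ)).aestronglyMeasurable)
    (.of_bound ((hc θ).mul (hlog θ)).aestronglyMeasurable _
      (.of_forall fun x => H.abs_rotAvg_mul_log_le θ x))
    ?_ (.of_forall fun x θ _ => ?_) ?_ (.of_forall fun x θ _ => ?_)).2
  · refine ((hlog θ).add continuous_const).aestronglyMeasurable.mul ?_
    refine StronglyMeasurable.aestronglyMeasurable (StronglyMeasurable.integral_prod_right'
      (f := fun p : EuclideanSpace ℝ (Fin n) × EuclideanSpace ℝ (Fin n) =>
        inner ℝ (k (cos θ • p.1 + sin θ • p.2)) (-sin θ • p.1 + cos θ • p.2)) ?_)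
    exact Continuous.stronglyMeasurable (by fun_prop)
  · rw [norm_mul]
    exact mul_le_mul (H.abs_log_rotAvg_add_one_le θ x)
      (norm_integral_le_of_norm_le (integrable_mul_norm_add L x)
        (.of_forall fun y => H.norm_inner_rotation_le θ x y)) (norm_nonneg _) (by positivity)
  · refine Integrable.const_mul ?_ _
    have h (x : EuclideanSpace ℝ (Fin n)) : ∫ y, L * (‖x‖ + ‖y‖) ∂(gaussian n)
        = L * (‖x‖ + ∫ y, ‖y‖ ∂(gaussian n)) := by
      rw [integral_const_mul, integral_add (integrable_const _) integrable_norm_gaussian]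
      simp
    simp_rw [h]
    exact (integrable_norm_gaussian.add (integrable_const _)).const_mul L
  · have h := H.hasDerivAt_rotAvg θ x
    convert! h.mul (h.log (H.rotAvg_pos θ x).ne') using 1
    field_simp [(H.rotAvg_pos θ x).ne']

/-- Integrating by parts along the rotated direction identifies the dissipation of entropy. -/
lemma integral_log_rotAvg_mul_eq (H : IsPosC1 g k ε M L) (θ : ℝ) :
    ∫ x, (log (rotAvg g θ x) + 1) *
        ∫ y, inner ℝ (k (cos θ • x + sin θ • y)) (-sin θ • x + cos θ • y) ∂(gaussian n)
        ∂(gaussian n)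
      = -(sin θ * cos θ) * ∫ x, (rotAvg g θ x)⁻¹ * ‖rotAvg k θ x‖ ^ 2 ∂(gaussian n) := by
  have hk := H.continuous_grad
  have hc : Continuous (rotAvg g θ) := continuous_rotAvg H.continuous H.norm_le θ
  have hV : Continuous (rotAvg k θ) := continuous_rotAvg hk H.norm_grad_le θ
  have hne (x) : rotAvg g θ x ≠ 0 := (H.rotAvg_pos θ x).ne'
  have hL := H.bound_nonneg
  have hε := H.pos
  have hrot (u v : EuclideanSpace ℝ (Fin n)) :
      cos θ • (cos θ • u + sin θ • v) - sin θ • (-sin θ • u + cos θ • v) = u := by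
    have h := cos_sq_add_sin_sq θ
    calc _ = (cos θ ^ 2 + sin θ ^ 2) • u := by module
      _ = u := by rw [h, one_smul]
  have hinv (x) : |(rotAvg g θ x)⁻¹| ≤ ε⁻¹ := by
    rw [abs_of_pos (inv_pos.2 (H.rotAvg_pos θ x))]
    exact inv_anti₀ hε (H.le_rotAvg θ x)
  let P (p : EuclideanSpace ℝ (Fin n) × EuclideanSpace ℝ (Fin n)) : ℝ :=
    (log (rotAvg g θ (cos θ • p.1 - sin θ • p.2)) + 1) * inner ℝ p.2 (k p.1)
  let Q (p : EuclideanSpace ℝ (Fin n) × EuclideanSpace ℝ (Fin n)) : ℝ :=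
    (rotAvg g θ (cos θ • p.1 - sin θ • p.2))⁻¹ *
      inner ℝ (rotAvg k θ (cos θ • p.1 - sin θ • p.2)) (k p.1)
  have hP : Continuous P := by
    refine Continuous.mul (Continuous.add (Continuous.log ?_ fun _ => hne _) continuous_const) ?_
      <;> fun_prop
  have hQ : Continuous Q := by
    refine Continuous.mul (Continuous.inv₀ ?_ fun _ => hne _) ?_ <;> fun_prop
  have hnorm : Integrable
      (fun p : EuclideanSpace ℝ (Fin n) × EuclideanSpace ℝ (Fin n) => ‖p.1‖ + ‖p.2‖)
      ((gaussian n).prod (gaussian n)) :=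
    (integrable_norm_gaussian.comp_fst _).add (integrable_norm_gaussian.comp_snd _)
  have iP : Integrable P ((gaussian n).prod (gaussian n)) := by
    refine (hnorm.const_mul ((|log ε| + |log M| + 1) * L)).mono' hP.aestronglyMeasurable
      (.of_forall fun p => ?_)
    rw [norm_mul, mul_assoc]
    refine mul_le_mul (H.abs_log_rotAvg_add_one_le θ _) ?_ (norm_nonneg _) (by positivity)
    refine (norm_inner_le_norm _ _).trans ?_
    rw [mul_comm]
    exact mul_le_mul (H.norm_grad_le _) (by simp) (norm_nonneg _) hL
  have hQle (p) : ‖Q p‖ ≤ ε⁻¹ * (L * L) := by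
    rw [norm_mul]
    refine mul_le_mul (hinv _) ((norm_inner_le_norm _ _).trans ?_) (norm_nonneg _) (by positivity)
    exact mul_le_mul (norm_rotAvg_le H.norm_grad_le θ _) (H.norm_grad_le _) (norm_nonneg _) hL
  have iQ : Integrable Q ((gaussian n).prod (gaussian n)) :=
    .of_bound hQ.aestronglyMeasurable _ (.of_forall hQle)
  have iPr : Integrable (fun p => P (ContinuousLinearMap.rotation θ p))
      ((gaussian n).prod (gaussian n)) := by
    rw [← map_rotation_gaussian θ] at iP
    exact iP.comp_measurable (by fun_prop)
  have iQr : Integrable (fun p => Q (ContinuousLinearMap.rotation θ p))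
      ((gaussian n).prod (gaussian n)) := by
    rw [← map_rotation_gaussian θ] at iQ
    exact iQ.comp_measurable (by fun_prop)
  have ibp (u : EuclideanSpace ℝ (Fin n)) :
      ∫ v, P (u, v) ∂(gaussian n) = -sin θ * cos θ * ∫ v, Q (u, v) ∂(gaussian n) := by
    rw [← integral_const_mul]
    refine (integral_mul_inner_gaussian
      (ψ := fun v => log (rotAvg g θ (cos θ • u - sin θ • v)) + 1)
      (ψ' := fun v => (rotAvg g θ (cos θ • u - sin θ • v))⁻¹ •
        ((-sin θ * cos θ) • innerSL ℝ (rotAvg k θ (cos θ • u - sin θ • v))))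
      (A := |log ε| + |log M| + 1) (B := ε⁻¹ * (1 * L)) (fun v => ?_) ?_
      (fun v => H.abs_log_rotAvg_add_one_le θ _) (fun v => ?_) (k u)).trans ?_
    · have h1 : HasFDerivAt (fun v => cos θ • u - sin θ • v)
          (-(sin θ • ContinuousLinearMap.id ℝ (EuclideanSpace ℝ (Fin n)))) v :=
        ((hasFDerivAt_id v).const_smul (sin θ)).const_sub _
      convert! (((H.hasFDerivAt_rotAvg θ _).comp v h1).log (hne _)).add_const 1 using 1
      ext w
      simp [hne]
      ring
    · refine Continuous.smul (Continuous.inv₀ ?_ fun _ => hne _) ?_ <;> fun_prop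
    · rw [norm_smul, norm_smul, innerSL_apply_norm]
      refine mul_le_mul (hinv _) (mul_le_mul ?_ (norm_rotAvg_le H.norm_grad_le θ _)
        (norm_nonneg _) zero_le_one) (by positivity) (by positivity)
      rw [norm_mul, norm_neg]
      exact mul_le_one₀ (abs_sin_le_one θ) (norm_nonneg _) (abs_cos_le_one θ)
    · congr with v
      simp [Q]
      ring
  calc _ = ∫ p, P (ContinuousLinearMap.rotation θ p) ∂((gaussian n).prod (gaussian n)) := by
        rw [integral_prod _ iPr]
        congr with x
        rw [← integral_const_mul]
        congr with y
        simp only [P, ContinuousLinearMap.rotation_apply, hrot]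
        rw [real_inner_comm]
    _ = -sin θ * cos θ *
        ∫ p, Q (ContinuousLinearMap.rotation θ p) ∂((gaussian n).prod (gaussian n)) := by
        rw [integral_comp_rotation_prod hP, integral_comp_rotation_prod hQ, integral_prod _ iP,
          integral_prod _ iQ, ← integral_const_mul]
        congr with u
        exact ibp u
    _ = _ := by
        rw [integral_prod _ iQr, neg_mul]
        congr with x
        simp only [Q, ContinuousLinearMap.rotation_apply, hrot]
        rw [integral_const_mul, integral_inner (integrable_comp_rotation hk H.norm_grad_le θ x),
          ← real_inner_self_eq_norm_sq]
        rfl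

lemma continuous_norm_grad_sq_div (H : IsPosC1 g k ε M L) :
    Continuous fun x => ‖k x‖ ^ 2 / g x :=
  (H.continuous_grad.norm.pow 2).div H.continuous fun x => (H.apply_pos x).ne'

lemma norm_norm_grad_sq_div_le (H : IsPosC1 g k ε M L) (x) :
    ‖‖k x‖ ^ 2 / g x‖ ≤ L ^ 2 / ε := by
  have hg := H.apply_pos x
  have hε := H.pos
  rw [Real.norm_of_nonneg (by positivity)]
  gcongr
  exacts [H.norm_grad_le x, H.le_apply x]

/-- The Fisher information density of a mixture is at most the mixture of the densities. -/
lemma inv_rotAvg_mul_norm_sq_le (H : IsPosC1 g k ε M L) (θ : ℝ) (x) :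
    (rotAvg g θ x)⁻¹ * ‖rotAvg k θ x‖ ^ 2 ≤ rotAvg (fun z => ‖k z‖ ^ 2 / g z) θ x := by
  set h := rotAvg g θ x with hh
  set V := rotAvg k θ x with hV
  have hpos : 0 < h := H.rotAvg_pos θ x
  have ik := integrable_comp_rotation H.continuous_grad H.norm_grad_le θ x
  have ig := integrable_comp_rotation H.continuous H.norm_le θ x
  have hmono := integral_mono (μ := gaussian n)
    ((ik.const_inner (𝕜 := ℝ) V).const_mul (2 * h⁻¹))
    ((ig.mul_const ((h⁻¹) ^ 2 * ‖V‖ ^ 2)).add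
      (integrable_comp_rotation H.continuous_norm_grad_sq_div H.norm_norm_grad_sq_div_le θ x))
    (fun y => ?_)
  · simp only [Pi.add_apply] at hmono
    rw [integral_const_mul, integral_inner ik, integral_add (ig.mul_const _)
      (integrable_comp_rotation H.continuous_norm_grad_sq_div H.norm_norm_grad_sq_div_le θ x),
      integral_mul_const] at hmono
    change 2 * h⁻¹ * inner ℝ V V ≤ h * (h⁻¹ ^ 2 * ‖V‖ ^ 2) +
      rotAvg (fun z => ‖k z‖ ^ 2 / g z) θ x at hmono
    rw [real_inner_self_eq_norm_sq] at hmono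
    have : h * (h⁻¹ ^ 2 * ‖V‖ ^ 2) = h⁻¹ * ‖V‖ ^ 2 := by field_simp
    linarith
  · simp only [Pi.add_apply]
    set z := cos θ • x + sin θ • y
    have hg := H.apply_pos z
    have h1 : (inner ℝ V (k z) : ℝ) ≤ ‖V‖ * ‖k z‖ := real_inner_le_norm _ _
    have h2 : 0 ≤ (g z * (h⁻¹ * ‖V‖) - ‖k z‖) ^ 2 / g z := by positivity
    have h3 : (g z * (h⁻¹ * ‖V‖) - ‖k z‖) ^ 2 / g z
        = g z * (h⁻¹ ^ 2 * ‖V‖ ^ 2) + ‖k z‖ ^ 2 / g z - 2 * h⁻¹ * (‖V‖ * ‖k z‖) := by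
      field_simp
      ring
    have h4 : 2 * h⁻¹ * (inner ℝ V (k z) : ℝ) ≤ 2 * h⁻¹ * (‖V‖ * ‖k z‖) := by gcongr
    linarith

lemma integral_inv_rotAvg_mul_norm_sq_le (H : IsPosC1 g k ε M L) (θ : ℝ) :
    ∫ x, (rotAvg g θ x)⁻¹ * ‖rotAvg k θ x‖ ^ 2 ∂(gaussian n)
      ≤ ∫ x, ‖k x‖ ^ 2 / g x ∂(gaussian n) := by
  rw [← integral_rotAvg H.continuous_norm_grad_sq_div H.norm_norm_grad_sq_div_le θ]
  refine integral_mono_of_nonneg (.of_forall fun x => ?_) ?_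
    (.of_forall fun x => H.inv_rotAvg_mul_norm_sq_le θ x)
  · have := H.rotAvg_pos θ x
    positivity
  · exact .of_bound (continuous_rotAvg H.continuous_norm_grad_sq_div
      H.norm_norm_grad_sq_div_le θ).aestronglyMeasurable _
      (.of_forall fun x => norm_rotAvg_le H.norm_norm_grad_sq_div_le θ x)

/-- The logarithmic Sobolev inequality for a function bounded away from zero. -/
lemma integral_mul_log_sub_le (H : IsPosC1 g k ε M L) :
    ∫ x, g x * log (g x) ∂(gaussian n)
        - (∫ x, g x ∂(gaussian n)) * log (∫ x, g x ∂(gaussian n))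
      ≤ 2⁻¹ * ∫ x, ‖k x‖ ^ 2 / g x ∂(gaussian n) := by
  set I := ∫ x, ‖k x‖ ^ 2 / g x ∂(gaussian n)
  let Φ (θ : ℝ) : ℝ :=
    ∫ x, rotAvg g θ x * log (rotAvg g θ x) ∂(gaussian n) + 2⁻¹ * I * sin θ ^ 2
  have hd (θ : ℝ) : HasDerivAt Φ (-(sin θ * cos θ) *
      ∫ x, (rotAvg g θ x)⁻¹ * ‖rotAvg k θ x‖ ^ 2 ∂(gaussian n) + sin θ * cos θ * I) θ := by
    have h1 := H.hasDerivAt_integral_rotAvg_mul_log θ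
    rw [H.integral_log_rotAvg_mul_eq θ] at h1
    convert! h1.add (((hasDerivAt_sin θ).pow 2).const_mul (2⁻¹ * I)) using 1
    simp
    ring
  have hmono : MonotoneOn Φ (Set.Icc 0 (π / 2)) := by
    refine monotoneOn_of_deriv_nonneg (convex_Icc _ _)
      (fun θ _ => (hd θ).continuousAt.continuousWithinAt)
      (fun θ _ => (hd θ).differentiableAt.differentiableWithinAt) fun θ hθ => ?_
    rw [interior_Icc] at hθ
    rw [(hd θ).deriv]
    have hs : 0 ≤ sin θ := sin_nonneg_of_nonneg_of_le_pi hθ.1.le (by linarith [hθ.2, pi_pos])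
    have hc : 0 ≤ cos θ := cos_nonneg_of_mem_Icc ⟨by linarith [hθ.1, pi_pos], hθ.2.le⟩
    have := mul_le_mul_of_nonneg_left (H.integral_inv_rotAvg_mul_norm_sq_le θ) (mul_nonneg hs hc)
    linarith
  have h := hmono (Set.left_mem_Icc.2 (by positivity)) (Set.right_mem_Icc.2 (by positivity))
    (by positivity)
  simp [Φ, rotAvg] at h
  linarith

end IsPosC1

end EntropyFlow

/-- The entropy of `q + ε` tends to that of `q` as `ε` decreases to `0`. -/
lemma tendsto_integral_add_mul_log {n : ℕ} {q : EuclideanSpace ℝ (Fin n) → ℝ} {M : ℝ}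
    (hq : Continuous q) (h0 : ∀ x, 0 ≤ q x) (hM : ∀ x, q x ≤ M) :
    Filter.Tendsto (fun ε : ℝ => ∫ x, (q x + ε) * log (q x + ε) ∂(gaussian n)
        - (∫ x, (q x + ε) ∂(gaussian n)) * log (∫ x, (q x + ε) ∂(gaussian n)))
      (nhdsWithin 0 (Set.Ioi 0))
      (nhds (∫ x, q x * log (q x) ∂(gaussian n)
        - (∫ x, q x ∂(gaussian n)) * log (∫ x, q x ∂(gaussian n)))) := by
  have iq : Integrable q (gaussian n) := .of_bound hq.aestronglyMeasurable M
    (.of_forall fun x => by rw [Real.norm_of_nonneg (h0 x)]; exact hM x)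
  have hadd (ε : ℝ) : ∫ x, (q x + ε) ∂(gaussian n) = ∫ x, q x ∂(gaussian n) + ε := by
    rw [integral_add iq (integrable_const ε)]; simp
  simp_rw [hadd]
  obtain ⟨C, hC⟩ := (isCompact_Icc (a := (0 : ℝ)) (b := M + 1)).exists_bound_of_continuousOn
    continuous_mul_log.continuousOn
  refine Filter.Tendsto.sub ?_ ?_
  · refine tendsto_integral_filter_of_dominated_convergence (fun _ => C)
      (.of_forall fun ε => ?_) ?_ (integrable_const C) (.of_forall fun x => ?_)
    · exact (continuous_mul_log.comp (hq.add continuous_const)).aestronglyMeasurable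
    · filter_upwards [Ioo_mem_nhdsGT one_pos] with ε hε
      exact .of_forall fun x => hC _ ⟨by linarith [h0 x, hε.1], by linarith [hM x, hε.2]⟩
    · have : Continuous fun ε : ℝ => (q x + ε) * log (q x + ε) :=
        continuous_mul_log.comp (continuous_const.add continuous_id)
      simpa using (this.tendsto 0).mono_left nhdsWithin_le_nhds
  · have : Continuous fun ε : ℝ => (∫ x, q x ∂(gaussian n) + ε) *
        log (∫ x, q x ∂(gaussian n) + ε) :=
      continuous_mul_log.comp (continuous_const.add continuous_id)
    simpa using (this.tendsto 0).mono_left nhdsWithin_le_nhds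

lemma isPosC1_sq_add {n : ℕ} {f : EuclideanSpace ℝ (Fin n) → ℝ} (hf : ContDiff ℝ 1 f)
    {M L ε : ℝ} (hM : ∀ x, ‖f x‖ ≤ M) (hL : ∀ x, ‖gradient f x‖ ≤ L) (hε : 0 < ε) :
    IsPosC1 (fun x => f x ^ 2 + ε) (fun x => (2 * f x) • gradient f x) ε (M ^ 2 + ε)
      (2 * M * L) where
  pos := hε
  le_apply x := by simp [sq_nonneg]
  apply_le x := by
    have := pow_le_pow_left₀ (norm_nonneg _) (hM x) 2
    simpa using this
  hasFDerivAt x := by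
    have h := (hf.differentiable one_ne_zero x).hasGradientAt.hasFDerivAt
    convert! (h.pow 2).add_const ε using 1
    ext v
    simp
  continuous_grad := by
    have : Continuous (gradient f) :=
      (InnerProductSpace.toDual ℝ _).symm.continuous.comp (hf.continuous_fderiv one_ne_zero)
    have := hf.continuous
    fun_prop
  norm_grad_le x := by
    rw [norm_smul, norm_mul, Real.norm_two]
    have := (norm_nonneg _).trans (hM x)
    gcongr
    exacts [hM x, hL x]

theorem gaussian_logSobolev_sq (n : ℕ) (f : EuclideanSpace ℝ (Fin n) → ℝ)
    (hf : ContDiff ℝ (⊤ : ℕ∞) f) (hfs : HasCompactSupport f) :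
    ∫ x, f x ^ 2 * Real.log (f x ^ 2 / ∫ y, f y ^ 2 ∂(gaussian n)) ∂(gaussian n)
      ≤ 2 * ∫ x, ‖gradient f x‖ ^ 2 ∂(gaussian n) := by
  have hf1 : ContDiff ℝ 1 f := hf.of_le (by exact_mod_cast le_top)
  have hgc : Continuous (gradient f) :=
    (InnerProductSpace.toDual ℝ _).symm.continuous.comp (hf1.continuous_fderiv one_ne_zero)
  have hgs : HasCompactSupport (gradient f) :=
    (hfs.fderiv ℝ).comp_left (g := (InnerProductSpace.toDual ℝ _).symm) (map_zero _)
  obtain ⟨M, hM⟩ := hfs.exists_bound_of_continuous hf.continuous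
  obtain ⟨L, hL⟩ := hgs.exists_bound_of_continuous hgc
  have hsq (x) : f x ^ 2 ≤ M ^ 2 := by
    simpa using pow_le_pow_left₀ (norm_nonneg _) (hM x) 2
  have ig : Integrable (fun x => ‖gradient f x‖ ^ 2) (gaussian n) :=
    .of_bound (hgc.norm.pow 2).aestronglyMeasurable (L ^ 2)
      (.of_forall fun x => by simpa using pow_le_pow_left₀ (norm_nonneg _) (hL x) 2)
  have hε (ε : ℝ) (hε : 0 < ε) :
      ∫ x, (f x ^ 2 + ε) * log (f x ^ 2 + ε) ∂(gaussian n)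
        - (∫ x, (f x ^ 2 + ε) ∂(gaussian n)) * log (∫ x, (f x ^ 2 + ε) ∂(gaussian n))
      ≤ 2 * ∫ x, ‖gradient f x‖ ^ 2 ∂(gaussian n) := by
    refine (isPosC1_sq_add hf1 hM hL hε).integral_mul_log_sub_le.trans ?_
    have h : ∫ x, ‖(2 * f x) • gradient f x‖ ^ 2 / (f x ^ 2 + ε) ∂(gaussian n)
        ≤ ∫ x, 4 * ‖gradient f x‖ ^ 2 ∂(gaussian n) := by
      refine integral_mono_of_nonneg (.of_forall fun x => by positivity) (ig.const_mul 4)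
        (.of_forall fun x => ?_)
      dsimp only
      rw [norm_smul, div_le_iff₀ (by positivity), mul_pow, Real.norm_eq_abs, sq_abs]
      nlinarith [mul_nonneg hε.le (sq_nonneg ‖gradient f x‖)]
    rw [integral_const_mul] at h
    linarith
  have hlim := le_of_tendsto
    (tendsto_integral_add_mul_log (hf.continuous.pow 2) (fun x => sq_nonneg (f x)) hsq)
    (Filter.eventually_of_mem self_mem_nhdsWithin hε)
  set m := ∫ y, f y ^ 2 ∂(gaussian n) with hm
  by_cases hm0 : m = 0
  · simp only [hm0, div_zero, log_zero, mul_zero, integral_zero]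
    positivity
  obtain ⟨C, hC⟩ := (isCompact_Icc (a := (0 : ℝ)) (b := M ^ 2)).exists_bound_of_continuousOn
    continuous_mul_log.continuousOn
  have i1 : Integrable (fun x => f x ^ 2 * log (f x ^ 2)) (gaussian n) :=
    .of_bound (continuous_mul_log.comp (hf.continuous.pow 2)).aestronglyMeasurable C
      (.of_forall fun x => hC _ ⟨sq_nonneg _, hsq x⟩)
  have i2 : Integrable (fun x => f x ^ 2) (gaussian n) :=
    .of_bound (hf.continuous.pow 2).aestronglyMeasurable (M ^ 2)
      (.of_forall fun x => by simpa using hsq x)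
  have hpt (x) : f x ^ 2 * log (f x ^ 2 / m) = f x ^ 2 * log (f x ^ 2) - f x ^ 2 * log m := by
    rcases eq_or_ne (f x ^ 2) 0 with h | h
    · simp [h]
    · rw [log_div h hm0, mul_sub]
  simp_rw [hpt]
  rw [integral_sub i1 (i2.mul_const _), integral_mul_const]
  exact hlim
end

section
/- Talagrand's transport inequality for the Gaussian measure: for every probability density f with respect to the standard Gaussian γ on ℝⁿ (∫ f dγ = 1), the quadratic Wasserstein distance satisfies W₂(f dγ, dγ) ≤ √(2 Ent_γ(f)). -/
open MeasureTheory Real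

/-- `π` is a coupling of `μ` and `ν`. -/
def IsCoupling {n : ℕ} (pl : Measure (EuclideanSpace ℝ (Fin n) × EuclideanSpace ℝ (Fin n)))
    (μ ν : Measure (EuclideanSpace ℝ (Fin n))) : Prop :=
  pl.map Prod.fst = μ ∧ pl.map Prod.snd = ν

/-- Squared quadratic Wasserstein distance. -/
noncomputable def W2sq {n : ℕ} (μ ν : Measure (EuclideanSpace ℝ (Fin n))) : ℝ :=
  sInf { r : ℝ | ∃ pl, IsCoupling pl μ ν ∧ r = ∫ p, ‖p.1 - p.2‖ ^ 2 ∂pl }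

open Set Filter Topology ProbabilityTheory InformationTheory
open scoped ENNReal NNReal

/-! ### Monotone rearrangement of the one-dimensional Gaussian measure -/

lemma continuous_cdf (ν : Measure ℝ) [IsProbabilityMeasure ν] [NullSingletonClass ν] :
    Continuous (cdf ν) := by
  rw [continuous_iff_continuousAt]
  intro x
  have h : ν {x} = 0 := measure_singleton x
  rw [← measure_cdf ν, StieltjesFunction.measure_singleton, ENNReal.ofReal_eq_zero] at h
  refine (monotone_cdf ν).continuousAt_iff_leftLim_eq_rightLim.2 ?_
  rw [StieltjesFunction.rightLim_eq]
  exact le_antisymm ((monotone_cdf ν).leftLim_le le_rfl) (by linarith)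

instance isOpenPosMeasure_gaussianReal : (gaussianReal 0 1).IsOpenPosMeasure :=
  (gaussianReal_absolutelyContinuous' 0 one_ne_zero).isOpenPosMeasure

instance nullSingletonClass_gaussianReal_zero_one : NullSingletonClass (gaussianReal 0 1) :=
  nullSingletonClass_gaussianReal one_ne_zero

lemma strictMono_cdf_gaussianReal : StrictMono (cdf (gaussianReal 0 1)) := by
  intro a b hab
  have h : 0 < gaussianReal 0 1 (Ioc a b) :=
    (isOpen_Ioo.measure_pos _ (nonempty_Ioo.2 hab)).trans_le (measure_mono Ioo_subset_Ioc_self)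
  rw [← measure_cdf (gaussianReal 0 1), StieltjesFunction.measure_Ioc, ENNReal.ofReal_pos] at h
  linarith

lemma cdf_gaussianReal_pos (u : ℝ) : 0 < cdf (gaussianReal 0 1) u :=
  (cdf_nonneg _ (u - 1)).trans_lt (strictMono_cdf_gaussianReal (by linarith))

lemma cdf_gaussianReal_lt_one (u : ℝ) : cdf (gaussianReal 0 1) u < 1 :=
  (strictMono_cdf_gaussianReal (by linarith : u < u + 1)).trans_le (cdf_le_one _ _)

/-- The monotone map transporting the standard Gaussian measure to `ν`. -/
noncomputable def gaussianRearrangement (ν : Measure ℝ) (u : ℝ) : ℝ :=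
  sInf {t | cdf (gaussianReal 0 1) u ≤ cdf ν t}

lemma gaussianRearrangement_le_iff (ν : Measure ℝ) (u t : ℝ) :
    gaussianRearrangement ν u ≤ t ↔ cdf (gaussianReal 0 1) u ≤ cdf ν t := by
  set p := cdf (gaussianReal 0 1) u
  set S := {t | p ≤ cdf ν t}
  have hne : S.Nonempty :=
    (((tendsto_cdf_atTop ν).eventually_const_le (cdf_gaussianReal_lt_one u))).exists
  obtain ⟨b, hb⟩ := ((tendsto_cdf_atBot ν).eventually_lt_const (cdf_gaussianReal_pos u)).exists
  have hbdd : BddBelow S :=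
    ⟨b, fun t ht => le_of_not_gt fun hlt => absurd (monotone_cdf ν hlt.le) (by
      have : p ≤ cdf ν t := ht
      linarith)⟩
  refine ⟨fun h => ?_, fun h => csInf_le hbdd h⟩
  have hright : ∀ s ∈ Ioi t, p ≤ cdf ν s := fun s hs => by
    obtain ⟨r, hr, hrs⟩ := exists_lt_of_csInf_lt hne (lt_of_le_of_lt h hs)
    exact le_trans hr (monotone_cdf ν hrs.le)
  have hc : Tendsto (cdf ν) (𝓝[>] t) (𝓝 (cdf ν t)) :=
    ((cdf ν).right_continuous t).mono Ioi_subset_Ici_self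
  exact ge_of_tendsto hc (eventually_nhdsWithin_of_forall hright)

lemma monotone_gaussianRearrangement (ν : Measure ℝ) : Monotone (gaussianRearrangement ν) :=
  fun u v huv => (gaussianRearrangement_le_iff ν u _).2
    ((monotone_cdf _ huv).trans ((gaussianRearrangement_le_iff ν v _).1 le_rfl))

lemma cdf_gaussianRearrangement (ν : Measure ℝ) [IsProbabilityMeasure ν] [NullSingletonClass ν]
    (u : ℝ) :
    cdf ν (gaussianRearrangement ν u) = cdf (gaussianReal 0 1) u := by
  refine le_antisymm ?_ ((gaussianRearrangement_le_iff ν u _).1 le_rfl)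
  have hc : Tendsto (cdf ν) (𝓝[<] gaussianRearrangement ν u)
      (𝓝 (cdf ν (gaussianRearrangement ν u))) :=
    (continuous_cdf ν).continuousAt.continuousWithinAt
  refine le_of_tendsto hc (eventually_nhdsWithin_of_forall fun t ht => ?_)
  exact le_of_not_ge fun h => absurd ((gaussianRearrangement_le_iff ν u t).2 h) (not_le.2 ht)

lemma measurable_gaussianRearrangement_kernel {X : Type*} [MeasurableSpace X] (κ : Kernel X ℝ)
    [IsMarkovKernel κ] :
    Measurable fun p : X × ℝ => gaussianRearrangement (κ p.1) p.2 := by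
  refine measurable_of_Iic fun t => ?_
  have hset : (fun p : X × ℝ => gaussianRearrangement (κ p.1) p.2) ⁻¹' Iic t
      = {p | cdf (gaussianReal 0 1) p.2 ≤ (κ p.1 (Iic t)).toReal} := by
    ext p
    simp only [mem_preimage, mem_Iic, mem_ofPred_eq, gaussianRearrangement_le_iff]
    rw [cdf_eq_real (κ p.1)]
    rfl
  rw [hset]
  refine measurableSet_le ((monotone_cdf _).measurable.comp measurable_snd) ?_
  exact ((κ.measurable_coe measurableSet_Iic).comp measurable_fst).ennreal_toReal

lemma map_gaussianRearrangement (ν : Measure ℝ) [IsProbabilityMeasure ν] :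
    (gaussianReal 0 1).map (gaussianRearrangement ν) = ν := by
  have hm : Measurable (gaussianRearrangement ν) := (monotone_gaussianRearrangement ν).measurable
  have : IsProbabilityMeasure ((gaussianReal 0 1).map (gaussianRearrangement ν)) :=
    Measure.isProbabilityMeasure_map hm.aemeasurable
  refine Measure.ext_of_Iic _ _ fun t => ?_
  rw [Measure.map_apply hm measurableSet_Iic, ← ofReal_cdf ν t]
  have hset : gaussianRearrangement ν ⁻¹' Iic t
      = {u | cdf (gaussianReal 0 1) u ≤ cdf ν t} := by
    ext u
    simp [gaussianRearrangement_le_iff]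
  rw [hset]
  rcases (cdf_nonneg ν t).eq_or_lt with h0 | h0
  · have : {u | cdf (gaussianReal 0 1) u ≤ cdf ν t} = ∅ := by
      ext u
      simpa [← h0] using cdf_gaussianReal_pos u
    rw [this, ← h0]
    simp
  rcases (cdf_le_one ν t).eq_or_lt with h1 | h1
  · have : {u | cdf (gaussianReal 0 1) u ≤ cdf ν t} = univ := by
      ext u
      simpa [h1] using (cdf_gaussianReal_lt_one u).le
    rw [this, h1]
    simp
  obtain ⟨s, hs⟩ := mem_range_of_exists_le_of_exists_ge (continuous_cdf (gaussianReal 0 1))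
    (((tendsto_cdf_atBot _).eventually_le_const h0).exists)
    (((tendsto_cdf_atTop _).eventually_const_le h1).exists)
  have : {u | cdf (gaussianReal 0 1) u ≤ cdf ν t} = Iic s := by
    ext u
    simp [← hs, strictMono_cdf_gaussianReal.le_iff_le]
  rw [this, ← hs, ofReal_cdf]

/-! ### Gaussian integration by parts for monotone functions -/

lemma hasDerivAt_gaussianPDFReal (x : ℝ) :
    HasDerivAt (gaussianPDFReal 0 1) (-(x * gaussianPDFReal 0 1 x)) x := by
  have h : HasDerivAt (fun y : ℝ => -(y - 0) ^ 2 / (2 * ((1 : ℝ≥0) : ℝ))) (-x) x := by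
    have h1 := (((hasDerivAt_id x).sub_const 0).pow 2).neg.div_const (2 * ((1 : ℝ≥0) : ℝ))
    refine h1.congr_deriv ?_
    simp
    ring
  rw [gaussianPDFReal_def]
  refine (h.exp.const_mul _).congr_deriv ?_
  ring

lemma lintegral_Ioi_mul_gaussianPDF {t : ℝ} (ht : 0 ≤ t) :
    ∫⁻ x in Ioi t, ENNReal.ofReal x * gaussianPDF 0 1 x = gaussianPDF 0 1 t := by
  have hderiv : ∀ x ∈ Ici t, HasDerivAt (fun y => -gaussianPDFReal 0 1 y)
      (x * gaussianPDFReal 0 1 x) x := fun x _ => by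
    exact (hasDerivAt_gaussianPDFReal x).fun_neg.congr_deriv (neg_neg _)
  have hnn : ∀ x ∈ Ioi t, 0 ≤ x * gaussianPDFReal 0 1 x := fun x hx =>
    mul_nonneg (ht.trans (le_of_lt hx)) (gaussianPDFReal_nonneg _ _ _)
  have hlim : Tendsto (fun y => -gaussianPDFReal 0 1 y) atTop (𝓝 0) := by
    have h1 : Tendsto (fun y : ℝ => -(y - 0) ^ 2 / (2 * ((1 : ℝ≥0) : ℝ))) atTop atBot := by
      have : (fun y : ℝ => -(y - 0) ^ 2 / (2 * ((1 : ℝ≥0) : ℝ))) = fun y => -(y ^ 2 / 2) := by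
        ext y
        simp
        ring
      rw [this]
      exact tendsto_neg_atTop_atBot.comp
        ((tendsto_pow_atTop two_ne_zero).atTop_div_const two_pos)
    rw [gaussianPDFReal_def]
    simpa using ((Real.tendsto_exp_atBot.comp h1).const_mul
      (√(2 * π * ((1 : ℝ≥0) : ℝ)))⁻¹).neg
  have hint := integrableOn_Ioi_deriv_of_nonneg' hderiv hnn hlim
  have hval := integral_Ioi_of_hasDerivAt_of_nonneg' hderiv hnn hlim
  have hofReal := ofReal_integral_eq_lintegral_ofReal hint
    (ae_restrict_of_forall_mem measurableSet_Ioi hnn)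
  rw [hval] at hofReal
  simp only [sub_neg_eq_add, zero_add] at hofReal
  rw [gaussianPDF, hofReal]
  refine setLIntegral_congr_fun measurableSet_Ioi fun x hx => ?_
  rw [ENNReal.ofReal_mul (ht.trans (le_of_lt hx)), gaussianPDF]

lemma Monotone.lintegral_Ioc_deriv_le {h : ℝ → ℝ} (hh : Monotone h) {x : ℝ} (hx : 0 ≤ x) :
    ∫⁻ t in Ioc 0 x, ENNReal.ofReal (deriv h t) ≤ ENNReal.ofReal (h x - h 0) := by
  have hm : MonotoneOn h (uIcc 0 x) := hh.monotoneOn _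
  have hint := (intervalIntegrable_iff_integrableOn_Ioc_of_le hx).1 hm.intervalIntegrable_deriv
  have hmem := hm.intervalIntegral_deriv_mem_uIcc
  rw [uIcc_of_le (sub_nonneg.2 (hh hx)), intervalIntegral.integral_of_le hx] at hmem
  rw [← ofReal_integral_eq_lintegral_ofReal hint (ae_of_all _ fun t => hh.deriv_nonneg)]
  exact ENNReal.ofReal_le_ofReal hmem.2

lemma Monotone.setLIntegral_Ioi_deriv_gaussianReal_le {h : ℝ → ℝ} (hh : Monotone h) :
    ∫⁻ x in Ioi 0, ENNReal.ofReal (deriv h x) ∂(gaussianReal 0 1)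
      ≤ ∫⁻ x in Ioi 0, ENNReal.ofReal (x * (h x - h 0)) ∂(gaussianReal 0 1) := by
  have hmd : Measurable fun x => ENNReal.ofReal (deriv h x) := (measurable_deriv h).ennreal_ofReal
  have hmp : Measurable (gaussianPDF 0 1) := measurable_gaussianPDF 0 1
  have hmx : Measurable fun x => ENNReal.ofReal (x * (h x - h 0)) :=
    (measurable_id.mul (hh.measurable.sub_const _)).ennreal_ofReal
  rw [gaussianReal_of_var_ne_zero 0 one_ne_zero, restrict_withDensity measurableSet_Ioi,
    lintegral_withDensity_eq_lintegral_mul _ hmp hmd,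
    lintegral_withDensity_eq_lintegral_mul _ hmp hmx]
  simp only [Pi.mul_apply]
  set K : ℝ → ℝ → ℝ≥0∞ := fun t x => (Ioi t).indicator
    (fun x => ENNReal.ofReal (deriv h t) * (ENNReal.ofReal x * gaussianPDF 0 1 x)) x
  have hK : Measurable (Function.uncurry K) := by
    have : Function.uncurry K = {p : ℝ × ℝ | p.1 < p.2}.indicator
        (fun p => ENNReal.ofReal (deriv h p.1) *
          (ENNReal.ofReal p.2 * gaussianPDF 0 1 p.2)) := by
      ext ⟨t, x⟩
      simp [K, Function.uncurry, indicator]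
    rw [this]
    exact ((hmd.comp measurable_fst).mul
      (measurable_snd.ennreal_ofReal.mul (hmp.comp measurable_snd))).indicator
      (measurableSet_lt measurable_fst measurable_snd)
  calc ∫⁻ t in Ioi 0, gaussianPDF 0 1 t * ENNReal.ofReal (deriv h t)
      = ∫⁻ t in Ioi 0, ∫⁻ x in Ioi 0, K t x := by
        refine setLIntegral_congr_fun measurableSet_Ioi fun t ht => ?_
        have ht0 : (0 : ℝ) < t := ht
        simp only [K]
        rw [setLIntegral_indicator measurableSet_Ioi,
          inter_eq_left.2 (Ioi_subset_Ioi ht0.le),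
          lintegral_const_mul _ (by fun_prop), lintegral_Ioi_mul_gaussianPDF ht0.le, mul_comm]
    _ = ∫⁻ x in Ioi 0, ∫⁻ t in Ioi 0, K t x := lintegral_lintegral_swap hK.aemeasurable
    _ ≤ ∫⁻ x in Ioi 0, gaussianPDF 0 1 x * ENNReal.ofReal (x * (h x - h 0)) := by
        refine setLIntegral_mono' measurableSet_Ioi fun x hx => ?_
        have hx0 : (0 : ℝ) < x := hx
        calc ∫⁻ t in Ioi 0, K t x
            = ∫⁻ t in Ioi 0, (Iio x).indicator (fun t => ENNReal.ofReal (deriv h t) *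
                (ENNReal.ofReal x * gaussianPDF 0 1 x)) t := by
              simp [K, indicator]
          _ = (∫⁻ t in Iio x ∩ Ioi 0, ENNReal.ofReal (deriv h t)) *
                (ENNReal.ofReal x * gaussianPDF 0 1 x) := by
              rw [setLIntegral_indicator measurableSet_Iio, lintegral_mul_const _ hmd]
          _ ≤ ENNReal.ofReal (h x - h 0) * (ENNReal.ofReal x * gaussianPDF 0 1 x) := by
              gcongr
              refine (lintegral_mono_set ?_).trans (hh.lintegral_Ioc_deriv_le hx0.le)
              exact fun t ht => ⟨ht.2, le_of_lt ht.1⟩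
          _ = _ := by
              rw [ENNReal.ofReal_mul hx0.le]
              ring

lemma lintegral_gaussianReal_eq_add (g : ℝ → ℝ≥0∞) :
    ∫⁻ x, g x ∂(gaussianReal 0 1)
      = ∫⁻ x in Ioi 0, g x ∂(gaussianReal 0 1) + ∫⁻ x in Ioi 0, g (-x) ∂(gaussianReal 0 1) := by
  have hneg : MeasurePreserving (fun x : ℝ => -x) (gaussianReal 0 1) (gaussianReal 0 1) :=
    ⟨measurable_neg, by simpa using gaussianReal_map_neg (μ := 0) (v := 1)⟩
  have h := hneg.setLIntegral_comp_preimage_emb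
    (MeasurableEquiv.neg ℝ).measurableEmbedding g (Iio 0)
  have hpre : (fun x : ℝ => -x) ⁻¹' Iio 0 = Ioi 0 := by
    ext
    simp
  rw [hpre] at h
  rw [h, ← lintegral_add_compl g measurableSet_Ioi, compl_Ioi, restrict_Iio_eq_restrict_Iic]

lemma Monotone.lintegral_deriv_gaussianReal_le {h : ℝ → ℝ} (hh : Monotone h) :
    ∫⁻ x, ENNReal.ofReal (deriv h x) ∂(gaussianReal 0 1)
      ≤ ∫⁻ x, ENNReal.ofReal (x * (h x - h 0)) ∂(gaussianReal 0 1) := by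
  have hk : Monotone fun x => -h (-x) := fun a b hab => neg_le_neg (hh (neg_le_neg hab))
  have hd : deriv (fun x => -h (-x)) = fun x => deriv h (-x) := by
    ext x
    simp [deriv.fun_neg, deriv_comp_neg]
  have h2 := hk.setLIntegral_Ioi_deriv_gaussianReal_le
  rw [hd] at h2
  rw [lintegral_gaussianReal_eq_add, lintegral_gaussianReal_eq_add]
  refine add_le_add hh.setLIntegral_Ioi_deriv_gaussianReal_le (h2.trans_eq ?_)
  congr with x
  simp only [neg_zero]
  ring_nf

/-! ### The transport inequality in dimension one -/

lemma mul_le_mul_log_sub_add_exp {a : ℝ} (ha : 0 ≤ a) (b : ℝ) :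
    a * b ≤ a * log a - a + exp b := by
  rcases ha.eq_or_lt with rfl | ha
  · simpa using (exp_pos b).le
  have h := add_one_le_exp (b - log a)
  rw [exp_sub, exp_log ha, le_div_iff₀ ha] at h
  linarith

lemma integrable_exp_sq_div_four_gaussianReal :
    Integrable (fun y : ℝ => exp (y ^ 2 / 4)) (gaussianReal 0 1) := by
  rw [gaussianReal_of_var_ne_zero 0 one_ne_zero,
    integrable_withDensity_iff (measurable_gaussianPDF 0 1)
      (ae_of_all _ fun _ => gaussianPDF_lt_top)]
  refine ((integrable_exp_neg_mul_sq (show (0 : ℝ) < 1 / 4 by norm_num)).const_mul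
    (√(2 * π))⁻¹).congr (ae_of_all _ fun y => ?_)
  simp only [toReal_gaussianPDF, gaussianPDFReal, NNReal.coe_one, mul_one, sub_zero]
  rw [mul_left_comm, ← exp_add]
  ring_nf

lemma integrable_sq_of_integrable_llr {ν : Measure ℝ} [IsProbabilityMeasure ν]
    (hac : ν ≪ gaussianReal 0 1) (hint : Integrable (llr ν (gaussianReal 0 1)) ν) :
    Integrable (fun y : ℝ => y ^ 2) ν := by
  have hflog := (integrable_rnDeriv_mul_log_iff hac).2 hint
  have hdom := (hflog.sub (Measure.integrable_toReal_rnDeriv (μ := ν))).add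
    integrable_exp_sq_div_four_gaussianReal
  have h4 : Integrable (fun y : ℝ => y ^ 2 / 4) ν := by
    rw [← integrable_rnDeriv_smul_iff hac]
    refine hdom.mono' (by fun_prop) (ae_of_all _ fun y => ?_)
    rw [smul_eq_mul, Real.norm_of_nonneg (by positivity)]
    exact mul_le_mul_log_sub_add_exp ENNReal.toReal_nonneg _
  simpa [div_mul_cancel₀] using h4.mul_const 4

lemma integral_sq_gaussianReal : ∫ u : ℝ, u ^ 2 ∂(gaussianReal 0 1) = 1 := by
  have h := variance_fun_id_gaussianReal (μ := 0) (v := 1)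
  rw [variance_of_integral_eq_zero (by fun_prop) (by simp)] at h
  simpa using h

lemma le_llr_gaussianRearrangement {ν : Measure ℝ} [IsProbabilityMeasure ν]
    (hac : ν ≪ gaussianReal 0 1) :
    ∀ᵐ u ∂(gaussianReal 0 1),
      (gaussianRearrangement ν u ^ 2 - u ^ 2) / 2 - deriv (gaussianRearrangement ν) u + 1
        ≤ llr ν (gaussianReal 0 1) (gaussianRearrangement ν u) := by
  have : NullSingletonClass ν := ⟨fun x => hac (measure_singleton x)⟩
  set T := gaussianRearrangement ν
  have hTm : Monotone T := monotone_gaussianRearrangement ν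
  have hG : gaussianReal 0 1 ≪ volume := gaussianReal_absolutelyContinuous 0 one_ne_zero
  have hmp : MeasurePreserving T (gaussianReal 0 1) ν :=
    ⟨hTm.measurable, map_gaussianRearrangement ν⟩
  have hF : ∀ᵐ y ∂ν, HasDerivAt (cdf ν) (ν.rnDeriv volume y).toReal y := by
    have := (cdf ν).ae_hasDerivAt
    rw [measure_cdf] at this
    exact (hac.trans hG).ae_le this
  have hPhi : ∀ᵐ u, HasDerivAt (cdf (gaussianReal 0 1)) (gaussianPDFReal 0 1 u) u := by
    have := (cdf (gaussianReal 0 1)).ae_hasDerivAt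
    rw [measure_cdf] at this
    filter_upwards [this, rnDeriv_gaussianReal 0 1] with u hu hr
    rwa [hr, toReal_gaussianPDF] at hu
  have hdens : ∀ᵐ y ∂ν, (ν.rnDeriv volume y).toReal
      = (ν.rnDeriv (gaussianReal 0 1) y).toReal * gaussianPDFReal 0 1 y := by
    refine (hac.trans hG).ae_le ?_
    filter_upwards [Measure.rnDeriv_mul_rnDeriv (κ := volume) hac, rnDeriv_gaussianReal 0 1]
      with y hy hr
    rw [← hy, Pi.mul_apply, ENNReal.toReal_mul, hr, toReal_gaussianPDF]
  filter_upwards [hmp.quasiMeasurePreserving.ae hF, hmp.quasiMeasurePreserving.ae hdens,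
    hG.ae_le hPhi, hG.ae_le hTm.ae_differentiableAt] with u hFu hdu hPu hTu
  have hcomp : (cdf ν) ∘ T = cdf (gaussianReal 0 1) := funext (cdf_gaussianRearrangement ν)
  have hchain := hFu.comp u hTu.hasDerivAt
  rw [hcomp] at hchain
  have heq := hchain.unique hPu
  rw [hdu] at heq
  have hpu := gaussianPDFReal_pos 0 1 u one_ne_zero
  have hpT := gaussianPDFReal_pos 0 1 (T u) one_ne_zero
  set r := (ν.rnDeriv (gaussianReal 0 1) (T u)).toReal with hr
  have hD : 0 ≤ deriv T u := hTm.deriv_nonneg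
  have hDpos : 0 < deriv T u := hD.lt_of_ne fun h => by
    rw [← h, mul_zero] at heq
    exact hpu.ne heq
  have hrpos : 0 < r := ENNReal.toReal_nonneg.lt_of_ne fun h => by
    rw [← hr] at h
    rw [← h, zero_mul, zero_mul] at heq
    exact hpu.ne heq
  have hlog := congrArg log heq
  rw [log_mul (by positivity) hDpos.ne', log_mul hrpos.ne' hpT.ne'] at hlog
  have hlogpdf : ∀ x : ℝ, log (gaussianPDFReal 0 1 x) = log (√(2 * π))⁻¹ - x ^ 2 / 2 := by
    intro x
    rw [gaussianPDFReal, log_mul (by positivity) (exp_pos _).ne', log_exp]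
    simp
    ring
  rw [hlogpdf, hlogpdf] at hlog
  have hle := log_le_sub_one_of_pos hDpos
  change _ ≤ log r
  linarith

lemma lintegral_sq_gaussianRearrangement_sub_le (ν : Measure ℝ) [IsProbabilityMeasure ν] :
    ∫⁻ u, ENNReal.ofReal ((gaussianRearrangement ν u - u) ^ 2) ∂(gaussianReal 0 1)
      ≤ 2 * klDiv ν (gaussianReal 0 1) := by
  by_cases htop : klDiv ν (gaussianReal 0 1) = ∞
  · simp [htop]
  obtain ⟨hac, hint⟩ := klDiv_ne_top_iff.1 htop
  set T := gaussianRearrangement ν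
  have hTm : Monotone T := monotone_gaussianRearrangement ν
  have hmp : MeasurePreserving T (gaussianReal 0 1) ν :=
    ⟨hTm.measurable, map_gaussianRearrangement ν⟩
  have hT2 : Integrable (fun u => T u ^ 2) (gaussianReal 0 1) :=
    hmp.integrable_comp_of_integrable (integrable_sq_of_integrable_llr hac hint)
  have hTL : MemLp T 2 (gaussianReal 0 1) :=
    (memLp_two_iff_integrable_sq hTm.measurable.aestronglyMeasurable).2 hT2
  have hidL : MemLp (fun u : ℝ => u) 2 (gaussianReal 0 1) := memLp_id_gaussianReal 2
  have hid2 : Integrable (fun u : ℝ => u ^ 2) (gaussianReal 0 1) := hidL.integrable_sq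
  have hid : Integrable (fun u : ℝ => u) (gaussianReal 0 1) := hidL.integrable one_le_two
  have hmul : Integrable (fun u => u * T u) (gaussianReal 0 1) := hidL.integrable_mul hTL
  have hllr : Integrable (fun u => llr ν (gaussianReal 0 1) (T u)) (gaussianReal 0 1) :=
    hmp.integrable_comp_of_integrable hint
  have hllr_int : ∫ u, llr ν (gaussianReal 0 1) (T u) ∂(gaussianReal 0 1)
      = (klDiv ν (gaussianReal 0 1)).toReal := by
    rw [toReal_klDiv_of_measure_eq hac (by simp), ← hmp.map_eq,
      integral_map hTm.measurable.aemeasurable (by fun_prop), hmp.map_eq]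
  have hparts := hTm.lintegral_deriv_gaussianReal_le
  have hsub : Integrable (fun u => u * (T u - T 0)) (gaussianReal 0 1) :=
    (hmul.sub (hid.mul_const (T 0))).congr (ae_of_all _ fun u => by simp [mul_sub])
  have hsub_nonneg : ∀ u, 0 ≤ u * (T u - T 0) := fun u => by
    rcases le_total 0 u with hu | hu
    · exact mul_nonneg hu (sub_nonneg.2 (hTm hu))
    · exact mul_nonneg_of_nonpos_of_nonpos hu (sub_nonpos.2 (hTm hu))
  have hsub_int : ∫ u, u * (T u - T 0) ∂(gaussianReal 0 1)
      = ∫ u, u * T u ∂(gaussianReal 0 1) := by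
    simp_rw [mul_sub]
    rw [integral_sub hmul (hid.mul_const _), integral_mul_const]
    simp
  rw [← ofReal_integral_eq_lintegral_ofReal hsub (ae_of_all _ hsub_nonneg)] at hparts
  have hD : Integrable (deriv T) (gaussianReal 0 1) := by
    refine ⟨(measurable_deriv T).aestronglyMeasurable, ?_⟩
    rw [hasFiniteIntegral_iff_ofReal (ae_of_all _ fun u => hTm.deriv_nonneg)]
    exact hparts.trans_lt ENNReal.ofReal_lt_top
  rw [← ofReal_integral_eq_lintegral_ofReal hD (ae_of_all _ fun u => hTm.deriv_nonneg),
    ENNReal.ofReal_le_ofReal_iff (integral_nonneg hsub_nonneg), hsub_int] at hparts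
  have hsq : Integrable (fun u => (T u - u) ^ 2) (gaussianReal 0 1) := (hTL.sub hidL).integrable_sq
  rw [← ofReal_integral_eq_lintegral_ofReal hsq (ae_of_all _ fun u => sq_nonneg _),
    ← ENNReal.ofReal_toReal htop, ← hllr_int,
    show (2 : ℝ≥0∞) = ENNReal.ofReal 2 by simp, ← ENNReal.ofReal_mul two_pos.le]
  refine ENNReal.ofReal_le_ofReal ?_
  have h1 : Integrable (fun u => llr ν (gaussianReal 0 1) (T u) + deriv T u)
    (gaussianReal 0 1) := hllr.add hD
  have h2 : Integrable (fun u => llr ν (gaussianReal 0 1) (T u) + deriv T u - 1)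
    (gaussianReal 0 1) := h1.sub (integrable_const 1)
  have h3 : Integrable (fun u => llr ν (gaussianReal 0 1) (T u) + deriv T u - 1 + u ^ 2)
    (gaussianReal 0 1) := h2.add hid2
  calc ∫ u, (T u - u) ^ 2 ∂(gaussianReal 0 1)
      ≤ ∫ u, (2 * (llr ν (gaussianReal 0 1) (T u) + deriv T u - 1 + u ^ 2 - u * T u))
          ∂(gaussianReal 0 1) := by
        refine integral_mono_ae hsq ((h3.sub hmul).const_mul 2) ?_
        filter_upwards [le_llr_gaussianRearrangement hac] with u hu
        linarith
    _ ≤ 2 * ∫ u, llr ν (gaussianReal 0 1) (T u) ∂(gaussianReal 0 1) := by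
        rw [integral_const_mul, integral_sub h3 hmul, integral_add h2 hid2,
          integral_sub h1 (integrable_const 1), integral_add hllr hD, integral_sq_gaussianReal]
        simp
        linarith

/-! ### Tensorization -/

lemma lintegral_klDiv_le_klDiv_compProd {X Y : Type*} [MeasurableSpace X] [MeasurableSpace Y]
    [MeasurableSpace.CountableOrCountablyGenerated X Y] (μ : Measure X) [IsFiniteMeasure μ]
    (κ η : Kernel X Y) [IsFiniteKernel κ] [IsFiniteKernel η] :
    ∫⁻ x, klDiv (κ x) (η x) ∂μ ≤ klDiv (μ ⊗ₘ κ) (μ ⊗ₘ η) := by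
  by_cases hac : μ ⊗ₘ κ ≪ μ ⊗ₘ η
  swap
  · simp [klDiv_of_not_ac hac]
  have hac' : ∀ᵐ x ∂μ, κ x ≪ η x := Measure.absolutelyContinuous_compProd_right_iff.1 hac
  have hmeas : Measurable fun p : X × Y => κ.rnDeriv η p.1 p.2 := Kernel.measurable_rnDeriv κ η
  have hdens : (μ ⊗ₘ η).withDensity (fun p => κ.rnDeriv η p.1 p.2) = μ ⊗ₘ κ := by
    ext s hs
    rw [withDensity_apply _ hs, ← lintegral_indicator hs,
      Measure.lintegral_compProd (hmeas.indicator hs), Measure.compProd_apply hs]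
    refine lintegral_congr_ae ?_
    filter_upwards [hac'] with x hx
    have hsx : MeasurableSet (Prod.mk x ⁻¹' s) := measurable_prodMk_left hs
    calc ∫⁻ y, s.indicator (fun p : X × Y => κ.rnDeriv η p.1 p.2) (x, y) ∂(η x)
        = ∫⁻ y in Prod.mk x ⁻¹' s, κ.rnDeriv η x y ∂(η x) := by
          rw [← lintegral_indicator hsx]
          rfl
      _ = ∫⁻ y in Prod.mk x ⁻¹' s, (κ x).rnDeriv (η x) y ∂(η x) :=
          lintegral_congr_ae (ae_restrict_of_ae Kernel.rnDeriv_eq_rnDeriv_measure)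
      _ = κ x (Prod.mk x ⁻¹' s) := Measure.setLIntegral_rnDeriv hx _
  have hrn : (μ ⊗ₘ κ).rnDeriv (μ ⊗ₘ η) =ᵐ[μ ⊗ₘ η] fun p => κ.rnDeriv η p.1 p.2 := by
    conv_lhs => rw [← hdens]
    exact Measure.rnDeriv_withDensity _ hmeas
  rw [klDiv_eq_lintegral_klFun_of_ac hac]
  have hcongr : ∫⁻ p, ENNReal.ofReal (klFun ((μ ⊗ₘ κ).rnDeriv (μ ⊗ₘ η) p).toReal) ∂(μ ⊗ₘ η)
      = ∫⁻ p, ENNReal.ofReal (klFun (κ.rnDeriv η p.1 p.2).toReal) ∂(μ ⊗ₘ η) :=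
    lintegral_congr_ae (by filter_upwards [hrn] with p hp using by rw [hp])
  rw [hcongr, Measure.lintegral_compProd (by fun_prop)]
  refine lintegral_mono_ae ?_
  filter_upwards [hac'] with x hx
  rw [klDiv_eq_lintegral_klFun_of_ac hx]
  refine (lintegral_congr_ae ?_).le
  filter_upwards [Kernel.rnDeriv_eq_rnDeriv_measure (κ := κ) (η := η) (a := x)] with y hy
  rw [hy]

/-- The transport-entropy inequality for `γ` with cost `c`: every probability measure `ν` can be
coupled with `γ` at a cost of at most twice its relative entropy. -/
def TransportEntropyInequality {X : Type*} [MeasurableSpace X] (c : X × X → ℝ≥0∞)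
    (γ : Measure X) : Prop :=
  ∀ ν : Measure X, IsProbabilityMeasure ν → ∃ pl : Measure (X × X),
    pl.map Prod.fst = ν ∧ pl.map Prod.snd = γ ∧ ∫⁻ p, c p ∂pl ≤ 2 * klDiv ν γ

lemma map_prod_gaussianRearrangement {X : Type*} [MeasurableSpace X] (μ : Measure X) [SFinite μ]
    (κ : Kernel X ℝ) [IsMarkovKernel κ] :
    (μ.prod (gaussianReal 0 1)).map (fun p => (p.1, gaussianRearrangement (κ p.1) p.2))
      = μ ⊗ₘ κ := by
  have hT := measurable_gaussianRearrangement_kernel κ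
  ext s hs
  rw [Measure.map_apply (measurable_fst.prodMk hT) hs,
    Measure.prod_apply ((measurable_fst.prodMk hT) hs), Measure.compProd_apply hs]
  refine lintegral_congr fun x => ?_
  conv_rhs => rw [← map_gaussianRearrangement (κ x)]
  rw [Measure.map_apply (monotone_gaussianRearrangement _).measurable
    (measurable_prodMk_left hs)]
  rfl

lemma TransportEntropyInequality.prod_gaussianReal {X : Type*} [MeasurableSpace X]
    {c : X × X → ℝ≥0∞} (hc : Measurable c) {γ : Measure X} [IsProbabilityMeasure γ]
    (h : TransportEntropyInequality c γ) :
    TransportEntropyInequality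
      (fun p : (X × ℝ) × (X × ℝ) => c (p.1.1, p.2.1) + ENNReal.ofReal ((p.1.2 - p.2.2) ^ 2))
      (γ.prod (gaussianReal 0 1)) := by
  intro ν hν
  set κ := ν.condKernel
  have hdis : ν.fst ⊗ₘ κ = ν := ν.disintegrate κ
  obtain ⟨pl, hfst, hsnd, hcost⟩ := h ν.fst inferInstance
  have : IsProbabilityMeasure pl := by
    refine ⟨?_⟩
    have := congrArg (fun m => m univ) hsnd
    simpa [Measure.map_apply measurable_snd] using this
  have hT := measurable_gaussianRearrangement_kernel κ
  have hT1 : Measurable fun q : (X × X) × ℝ => gaussianRearrangement (κ q.1.1) q.2 :=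
    hT.comp ((measurable_fst.comp measurable_fst).prodMk measurable_snd)
  have hPsi : Measurable fun q : (X × X) × ℝ =>
      ((q.1.1, gaussianRearrangement (κ q.1.1) q.2), (q.1.2, q.2)) := by fun_prop
  refine ⟨(pl.prod (gaussianReal 0 1)).map fun q =>
      ((q.1.1, gaussianRearrangement (κ q.1.1) q.2), (q.1.2, q.2)), ?_, ?_, ?_⟩
  · rw [Measure.map_map measurable_fst hPsi]
    conv_rhs => rw [← hdis, ← map_prod_gaussianRearrangement, ← hfst,
      ← Measure.map_id (μ := gaussianReal 0 1), Measure.map_prod_map _ _ measurable_fst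
      measurable_id, Measure.map_map (measurable_fst.prodMk hT) (by fun_prop)]
    rfl
  · rw [Measure.map_map measurable_snd hPsi]
    conv_rhs => rw [← hsnd, ← Measure.map_id (μ := gaussianReal 0 1),
      Measure.map_prod_map _ _ measurable_snd measurable_id]
    rfl
  · have hmarg : Measurable fun x => ∫⁻ u, ENNReal.ofReal ((gaussianRearrangement (κ x) u - u) ^ 2)
        ∂(gaussianReal 0 1) := by
      refine Measurable.lintegral_prod_right' (f := fun p : X × ℝ =>
        ENNReal.ofReal ((gaussianRearrangement (κ p.1) p.2 - p.2) ^ 2)) ?_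
      exact ((hT.sub measurable_snd).pow_const 2).ennreal_ofReal
    have hchain : klDiv ν (γ.prod (gaussianReal 0 1))
        = klDiv ν.fst γ + klDiv (ν.fst ⊗ₘ κ) (ν.fst ⊗ₘ Kernel.const X (gaussianReal 0 1)) := by
      rw [← klDiv_compProd_eq_add, hdis, Measure.compProd_const]
    rw [lintegral_map (by fun_prop) hPsi, lintegral_add_left (by fun_prop), hchain, mul_add]
    refine add_le_add ?_ ?_
    · rw [lintegral_prod _ (by fun_prop)]
      simpa using hcost
    · rw [lintegral_prod _ (by fun_prop)]
      simp only []
      rw [← lintegral_map (f := fun x => ∫⁻ u, ENNReal.ofReal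
        ((gaussianRearrangement (κ x) u - u) ^ 2) ∂(gaussianReal 0 1)) hmarg measurable_fst, hfst]
      calc ∫⁻ x, ∫⁻ u, ENNReal.ofReal ((gaussianRearrangement (κ x) u - u) ^ 2)
            ∂(gaussianReal 0 1) ∂ν.fst
          ≤ ∫⁻ x, 2 * klDiv (κ x) (Kernel.const X (gaussianReal 0 1) x) ∂ν.fst :=
            lintegral_mono fun x => lintegral_sq_gaussianRearrangement_sub_le (κ x)
        _ = 2 * ∫⁻ x, klDiv (κ x) (Kernel.const X (gaussianReal 0 1) x) ∂ν.fst :=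
            lintegral_const_mul' _ _ (by simp)
        _ ≤ _ := by
            gcongr
            exact lintegral_klDiv_le_klDiv_compProd _ _ _

lemma TransportEntropyInequality.of_measurableEquiv {X Y : Type*} [MeasurableSpace X]
    [MeasurableSpace Y] {c : X × X → ℝ≥0∞} {γ : Measure X} [IsFiniteMeasure γ]
    (h : TransportEntropyInequality c γ) (e : X ≃ᵐ Y) :
    TransportEntropyInequality (fun p : Y × Y => c (e.symm p.1, e.symm p.2)) (γ.map e) := by
  intro ν hν
  have : IsProbabilityMeasure (ν.map e.symm) :=
    Measure.isProbabilityMeasure_map e.symm.measurable.aemeasurable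
  obtain ⟨pl, hfst, hsnd, hcost⟩ := h (ν.map e.symm) inferInstance
  refine ⟨pl.map (e.prodCongr e), ?_, ?_, ?_⟩
  · rw [Measure.map_map measurable_fst (e.prodCongr e).measurable]
    have : Prod.fst ∘ (e.prodCongr e) = e ∘ Prod.fst := rfl
    rw [this, ← Measure.map_map e.measurable measurable_fst, hfst, e.map_map_symm]
  · rw [Measure.map_map measurable_snd (e.prodCongr e).measurable]
    have : Prod.snd ∘ (e.prodCongr e) = e ∘ Prod.snd := rfl
    rw [this, ← Measure.map_map e.measurable measurable_snd, hsnd]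
  · rw [lintegral_map_equiv]
    have hle := klDiv_map_le ν (γ.map e) e.symm.measurable
    rw [e.map_symm_map] at hle
    refine le_trans ?_ (mul_le_mul_right hle 2)
    have hcomp : ∀ p : X × X,
        c (e.symm (e.prodCongr e p).1, e.symm (e.prodCongr e p).2) = c p := fun p => by
      rw [show e.prodCongr e p = (e p.1, e p.2) from rfl, e.symm_apply_apply, e.symm_apply_apply]
    simpa only [hcomp] using hcost

lemma transportEntropyInequality_pi_gaussianReal (n : ℕ) :
    TransportEntropyInequality
      (fun p : (Fin n → ℝ) × (Fin n → ℝ) => ∑ i, ENNReal.ofReal ((p.1 i - p.2 i) ^ 2))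
      (Measure.pi fun _ => gaussianReal 0 1) := by
  induction n with
  | zero =>
    intro ν hν
    refine ⟨ν.prod (Measure.pi fun _ => gaussianReal 0 1), ?_, ?_, ?_⟩
    · simp [Measure.map_fst_prod]
    · simp [Measure.map_snd_prod]
    · simp
  | succ n ih =>
    have h := (ih.prod_gaussianReal (by fun_prop)).of_measurableEquiv
      (MeasurableEquiv.prodComm.trans
        (MeasurableEquiv.piFinSuccAbove (fun _ : Fin (n + 1) => ℝ) 0).symm)
    have hmap : ((Measure.pi fun _ : Fin n => gaussianReal 0 1).prod (gaussianReal 0 1)).map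
        (MeasurableEquiv.prodComm.trans
          (MeasurableEquiv.piFinSuccAbove (fun _ : Fin (n + 1) => ℝ) 0).symm)
        = Measure.pi fun _ => gaussianReal 0 1 := by
      rw [MeasurableEquiv.coe_trans, ← Measure.map_map (MeasurableEquiv.measurable _)
        (MeasurableEquiv.measurable _)]
      have hswap : ((Measure.pi fun _ : Fin n => gaussianReal 0 1).prod (gaussianReal 0 1)).map
          (MeasurableEquiv.prodComm : (Fin n → ℝ) × ℝ ≃ᵐ ℝ × (Fin n → ℝ))
          = (gaussianReal 0 1).prod (Measure.pi fun _ => gaussianReal 0 1) :=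
        Measure.prod_swap
      rw [hswap]
      exact (measurePreserving_piFinSuccAbove (fun _ : Fin (n + 1) => gaussianReal 0 1) 0).symm.map_eq
    rw [hmap] at h
    convert! h using 2 with p
    rw [Fin.sum_univ_succ, add_comm]
    rfl

/-! ### The standard Gaussian measure on Euclidean space -/

lemma MeasureTheory.MeasurePreserving.withDensity_comp {X Y : Type*} [MeasurableSpace X]
    [MeasurableSpace Y] {μ : Measure X} {ν : Measure Y} {e : X → Y} (he : MeasurePreserving e μ ν)
    {g : Y → ℝ≥0∞} (hg : Measurable g) :
    MeasurePreserving e (μ.withDensity (g ∘ e)) (ν.withDensity g) := by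
  refine ⟨he.measurable, Measure.ext fun s hs => ?_⟩
  rw [Measure.map_apply he.measurable hs, withDensity_apply _ (he.measurable hs),
    withDensity_apply _ hs, ← he.setLIntegral_comp_preimage hs hg]
  rfl

lemma pi_gaussianReal_eq_withDensity (n : ℕ) :
    (Measure.pi fun _ : Fin n => gaussianReal 0 1)
      = volume.withDensity fun x => ∏ i, gaussianPDF 0 1 (x i) := by
  have hmp : Measurable (gaussianPDF 0 1) := measurable_gaussianPDF 0 1
  induction n with
  | zero =>
    simp only [Finset.univ_eq_empty, Finset.prod_empty, withDensity_const, one_smul, volume_pi]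
    congr 1
    exact Subsingleton.elim _ _
  | succ n ih =>
    have hG := (measurePreserving_piFinSuccAbove (fun _ : Fin (n + 1) => gaussianReal 0 1) 0).symm
    have hV := (volume_preserving_piFinSuccAbove (fun _ : Fin (n + 1) => ℝ) 0).symm
    rw [← hG.map_eq]
    rw [ih, gaussianReal_of_var_ne_zero 0 one_ne_zero, prod_withDensity hmp (by fun_prop)]
    have := (hV.withDensity_comp
      (g := fun x => ∏ i, gaussianPDF 0 1 (x i)) (by fun_prop)).map_eq
    rw [← this]
    congr 2
    ext p
    simp [Fin.prod_univ_succ, MeasurableEquiv.piFinSuccAbove]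

lemma prod_gaussianPDF_eq {n : ℕ} (x : EuclideanSpace ℝ (Fin n)) :
    ∏ i, gaussianPDF 0 1 (x i)
      = ENNReal.ofReal ((2 * Real.pi) ^ (-(n : ℝ) / 2) * Real.exp (-‖x‖ ^ 2 / 2)) := by
  simp only [gaussianPDF]
  rw [← ENNReal.ofReal_prod_of_nonneg fun i _ => gaussianPDFReal_nonneg _ _ _]
  congr 1
  simp only [gaussianPDFReal, NNReal.coe_one, mul_one, sub_zero]
  rw [Finset.prod_mul_distrib, Finset.prod_const, Finset.card_univ, Fintype.card_fin, ← exp_sum,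
    EuclideanSpace.real_norm_sq_eq, ← Finset.sum_div, Finset.sum_neg_distrib]
  congr 1
  rw [sqrt_eq_rpow, ← rpow_neg (by positivity), ← rpow_natCast, ← rpow_mul (by positivity)]
  ring_nf

lemma map_toLp_pi_gaussianReal (n : ℕ) :
    (Measure.pi fun _ : Fin n => gaussianReal 0 1).map (MeasurableEquiv.toLp 2 (Fin n → ℝ))
      = gaussian n := by
  have hV : MeasurePreserving (MeasurableEquiv.toLp 2 (Fin n → ℝ)) volume volume :=
    PiLp.volume_preserving_toLp (Fin n)
  have h := (hV.withDensity_comp (g := fun x => ENNReal.ofReal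
    ((2 * Real.pi) ^ (-(n : ℝ) / 2) * Real.exp (-‖x‖ ^ 2 / 2))) (by fun_prop)).map_eq
  rw [gaussian, ← h, pi_gaussianReal_eq_withDensity]
  congr 2
  ext x
  exact prod_gaussianPDF_eq (WithLp.toLp 2 x)

instance isProbabilityMeasure_gaussian (n : ℕ) : IsProbabilityMeasure (gaussian n) := by
  rw [← map_toLp_pi_gaussianReal]
  exact Measure.isProbabilityMeasure_map (MeasurableEquiv.measurable _).aemeasurable

lemma transportEntropyInequality_gaussian (n : ℕ) :
    TransportEntropyInequality
      (fun p : EuclideanSpace ℝ (Fin n) × EuclideanSpace ℝ (Fin n) =>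
        ENNReal.ofReal (‖p.1 - p.2‖ ^ 2)) (gaussian n) := by
  have h := (transportEntropyInequality_pi_gaussianReal n).of_measurableEquiv
    (MeasurableEquiv.toLp 2 (Fin n → ℝ))
  rw [map_toLp_pi_gaussianReal] at h
  convert! h using 2 with p
  rw [EuclideanSpace.real_norm_sq_eq, ENNReal.ofReal_sum_of_nonneg fun i _ => sq_nonneg _]
  rfl

lemma klDiv_withDensity_ofReal {X : Type*} [MeasurableSpace X] {γ : Measure X}
    [IsProbabilityMeasure γ] {f : X → ℝ} (hpos : ∀ x, 0 ≤ f x) (hf : Integrable f γ)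
    [IsProbabilityMeasure (γ.withDensity fun x => ENNReal.ofReal (f x))]
    (hint : Integrable (fun x => f x * log (f x)) γ) :
    klDiv (γ.withDensity fun x => ENNReal.ofReal (f x)) γ
      = ENNReal.ofReal (∫ x, f x * log (f x) ∂γ) := by
  set ν := γ.withDensity fun x => ENNReal.ofReal (f x)
  have hac : ν ≪ γ := withDensity_absolutelyContinuous _ _
  have hrn : ∀ᵐ x ∂γ, (ν.rnDeriv γ x).toReal = f x := by
    filter_upwards [Measure.rnDeriv_withDensity₀ γ hf.aemeasurable.ennreal_ofReal] with x hx
    rw [hx, ENNReal.toReal_ofReal (hpos x)]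
  have hcongr : (fun x => (ν.rnDeriv γ x).toReal * log (ν.rnDeriv γ x).toReal)
      =ᵐ[γ] fun x => f x * log (f x) := by
    filter_upwards [hrn] with x hx
    rw [hx]
  have hllr : Integrable (llr ν γ) ν :=
    (integrable_rnDeriv_mul_log_iff hac).1 (hint.congr hcongr.symm)
  rw [klDiv_of_ac_of_integrable hac hllr, ← integral_rnDeriv_mul_log hac,
    integral_congr_ae hcongr]
  simp

theorem talagrand_gaussian (n : ℕ) (f : EuclideanSpace ℝ (Fin n) → ℝ)
    (hpos : ∀ x, 0 ≤ f x) (hmass : ∫ x, f x ∂(gaussian n) = 1)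
    (hint : Integrable (fun x => f x * Real.log (f x)) (gaussian n)) :
    Real.sqrt (W2sq ((gaussian n).withDensity (fun x => ENNReal.ofReal (f x))) (gaussian n))
      ≤ Real.sqrt (2 * ∫ x, f x * Real.log (f x) ∂(gaussian n)) := by
  have hf : Integrable f (gaussian n) := .of_integral_ne_zero (by simp [hmass])
  have hprob : IsProbabilityMeasure
      ((gaussian n).withDensity fun x => ENNReal.ofReal (f x)) := by
    refine ⟨?_⟩
    rw [withDensity_apply _ MeasurableSet.univ, Measure.restrict_univ,
      ← ofReal_integral_eq_lintegral_ofReal hf (ae_of_all _ hpos), hmass, ENNReal.ofReal_one]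
  obtain ⟨pl, hfst, hsnd, hcost⟩ := transportEntropyInequality_gaussian n _ hprob
  have hmul : ∀ r : ℝ, 2 * ENNReal.ofReal r = ENNReal.ofReal (2 * r) := fun r => by
    rw [ENNReal.ofReal_mul two_pos.le, ENNReal.ofReal_ofNat]
  rw [klDiv_withDensity_ofReal hpos hf hint, hmul] at hcost
  have hbdd : BddBelow {r : ℝ | ∃ pl, IsCoupling pl
      ((gaussian n).withDensity fun x => ENNReal.ofReal (f x)) (gaussian n) ∧
        r = ∫ p, ‖p.1 - p.2‖ ^ 2 ∂pl} := by
    refine ⟨0, ?_⟩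
    rintro r ⟨q, -, rfl⟩
    exact integral_nonneg fun p => by positivity
  have hW : W2sq ((gaussian n).withDensity fun x => ENNReal.ofReal (f x)) (gaussian n)
      ≤ ∫ p, ‖p.1 - p.2‖ ^ 2 ∂pl := csInf_le hbdd ⟨pl, ⟨hfst, hsnd⟩, rfl⟩
  refine (sqrt_le_sqrt hW).trans ?_
  rw [integral_eq_lintegral_of_nonneg_ae (ae_of_all _ fun p => by positivity) (by fun_prop)]
  by_cases hE : 0 ≤ 2 * ∫ x, f x * Real.log (f x) ∂(gaussian n)
  · exact sqrt_le_sqrt (ENNReal.toReal_le_of_le_ofReal hE hcost)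
  · rw [ENNReal.ofReal_of_nonpos (not_le.1 hE).le, nonpos_iff_eq_zero] at hcost
    beta_reduce at hcost
    rw [hcost, ENNReal.toReal_zero, sqrt_zero]
    exact sqrt_nonneg _
end
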